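/- Let E belong to the class A(λ,n,m), let F = ⋃_{j=1}^t g_j(F) be a dust-like self-similar set, let f : F → E be a bi-Lipschitz bijection, and let s = dim_H E = dim_H F. Then there exist a finite word w = j₁⋯j_{k*} over {1,…,t} and a constant d̄ > 0 such that for every Borel set B ⊆ F_w one has H^s(f(B)) = d̄ · H^s(B). -/

import Mathlib

open MeasureTheory Polynomial

/-- The class `𝒜(λ, n, m)` of self-similar subsets of `ℝ` with `m` exact overlaps,
generated by `n` similitudes `fᵢ x = λ x + bᵢ` of the same ratio `λ`. -/
def IsInClassA (lam : ℝ) (n m : ℕ) (E : Set ℝ) : Prop :=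
  lam ∈ Set.Ioo (0 : ℝ) 1 ∧ 1 ≤ m ∧ m + 2 ≤ n ∧
  ∃ b : ℕ → ℝ,
    b 0 = 0 ∧ b (n - 1) = 1 - lam ∧
    (∀ i, i + 1 < n → b i < b (i + 1)) ∧
    (∀ i, i + 1 < n →
      (Set.Icc (b i) (b i + lam) ∩ Set.Icc (b (i + 1)) (b (i + 1) + lam)).Nonempty →
        volume (Set.Icc (b i) (b i + lam) ∩ Set.Icc (b (i + 1)) (b (i + 1) + lam)) = 0 ∨
        volume (Set.Icc (b i) (b i + lam) ∩ Set.Icc (b (i + 1)) (b (i + 1) + lam)) =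
          ENNReal.ofReal (lam * lam)) ∧
    {i : ℕ | i + 1 < n ∧
      volume (Set.Icc (b i) (b i + lam) ∩ Set.Icc (b (i + 1)) (b (i + 1) + lam)) =
        ENNReal.ofReal (lam * lam)}.ncard = m ∧
    E.Nonempty ∧ IsCompact E ∧
    E = ⋃ i ∈ Finset.range n, (fun x => lam * x + b i) '' E

/-- A dust-like self-similar set in `ℝ^d`: the attractor of `t ≥ 2` contracting similitudes
whose images are pairwise disjoint (strong separation condition). -/
def IsDustLike {d : ℕ} (F : Set (EuclideanSpace ℝ (Fin d))) : Prop :=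
  F.Nonempty ∧ IsCompact F ∧
  ∃ t : ℕ, 2 ≤ t ∧
    ∃ (g : Fin t → EuclideanSpace ℝ (Fin d) → EuclideanSpace ℝ (Fin d)) (r : Fin t → ℝ),
      (∀ j, r j ∈ Set.Ioo (0 : ℝ) 1) ∧
      (∀ j x y, dist (g j x) (g j y) = r j * dist x y) ∧
      F = ⋃ j, g j '' F ∧
      (∀ j j', j ≠ j' → Disjoint (g j '' F) (g j' '' F))

/-- Lipschitz equivalence of two sets in (possibly different) metric spaces. -/
def LipEquiv {X Y : Type*} [MetricSpace X] [MetricSpace Y] (A : Set X) (B : Set Y) : Prop :=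
  ∃ f : A → B, Function.Bijective f ∧ ∃ C : ℝ, 0 < C ∧
    ∀ x y : A, C⁻¹ * dist x y ≤ dist (f x) (f y) ∧ dist (f x) (f y) ≤ C * dist x y

/-- The copy `F_w = g_{w₁} ∘ ⋯ ∘ g_{w_k}(F)` of `F` indexed by a finite word `w`. -/
def cylinder {X : Type*} {t : ℕ} (g : Fin t → X → X) (F : Set X) : List (Fin t) → Set X
  | [] => F
  | j :: w => g j '' cylinder g F w


/-- finite type abstract lemma -/
noncomputable def GG (lam : ℝ) (G0 Dl : Finset ℝ) : ℕ → Finset ℝ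
  | 0 => G0
  | j + 1 => (GG lam G0 Dl j ×ˢ Dl).image fun p => (p.1 + p.2) / lam

def DD (lam : ℝ) (Dl : Set ℝ) : ℕ → Set ℝ
  | 0 => {0}
  | k + 1 => {x | ∃ d ∈ DD lam Dl k, ∃ β ∈ Dl, x = (d + β) / lam}

lemma finite_gap (A : Finset ℝ) : ∃ ε > 0, ∀ a ∈ A, 0 < a → ε ≤ a := by
  induction A using Finset.induction_on with
  | empty => exact ⟨1, one_pos, by simp⟩
  | insert a A _ ih =>
    obtain ⟨ε, hε, h⟩ := ih
    by_cases ha : 0 < a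
    · refine ⟨min ε a, lt_min hε ha, ?_⟩
      intro x hx hx0
      rcases Finset.mem_insert.1 hx with rfl | hx
      · exact min_le_right _ _
      · exact (min_le_left _ _).trans (h x hx hx0)
    · refine ⟨ε, hε, ?_⟩
      intro x hx hx0
      rcases Finset.mem_insert.1 hx with rfl | hx
      · exact absurd hx0 ha
      · exact h x hx hx0

lemma finite_type_abs (lam : ℝ) (h0 : 0 < lam) (h1 : lam < 1) (G0 Dl : Finset ℝ)
    (hz : (0:ℝ) ∈ G0)
    (hP1 : ∀ d ∈ G0, ∀ β ∈ Dl, (d + β) / lam ∈ G0 ∨ 1 < |(d + β) / lam|)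
    (hP2 : ∀ β ∈ Dl, |β| ≤ 1 - lam) (M : ℝ) :
    ∃ G : Finset ℝ, ∀ k, ∀ x ∈ DD lam (Dl : Set ℝ) k, |x| ≤ M → x ∈ G := by
  obtain ⟨ε, hε, hgap⟩ := finite_gap ((GG lam G0 Dl 1).image fun d => |d| - 1)
  have inv : ∀ k, ∀ x ∈ DD lam (Dl : Set ℝ) k, x ∈ G0 ∨
      ∃ j, x ∈ GG lam G0 Dl (j+1) ∧ ε * (1/lam)^j ≤ |x| - 1 := by
    intro k
    induction k with
    | zero => intro x hx; left; rw [show x = 0 from hx]; exact hz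
    | succ k ih =>
      rintro x ⟨d, hd, β, hβ, rfl⟩
      rcases ih d hd with h | ⟨j, hj, hje⟩
      · rcases hP1 d h β hβ with h' | h'
        · exact Or.inl h'
        · right
          have hm : (d + β) / lam ∈ GG lam G0 Dl 1 :=
            Finset.mem_image.2 ⟨(d, β), Finset.mem_product.2 ⟨h, hβ⟩, rfl⟩
          refine ⟨0, hm, ?_⟩
          rw [pow_zero, mul_one]
          exact hgap _ (Finset.mem_image.2 ⟨_, hm, rfl⟩) (by linarith)
      · right
        refine ⟨j+1, Finset.mem_image.2 ⟨(d, β), Finset.mem_product.2 ⟨hj, hβ⟩, rfl⟩, ?_⟩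
        have hb := hP2 β hβ
        have h3 : |d| - |β| ≤ |d + β| := by
          have := abs_sub_abs_le_abs_sub d (-β); simpa using this
        rw [abs_div, abs_of_pos h0, pow_succ, ← mul_assoc]
        have : ε * (1 / lam) ^ j * (1 / lam) ≤ (|d| - 1) * (1/lam) :=
          mul_le_mul_of_nonneg_right hje (by positivity)
        refine this.trans ?_
        rw [le_sub_iff_add_le, le_div_iff₀ h0]
        have : ((|d| - 1) * (1 / lam) + 1) * lam = |d| - 1 + lam := by field_simp
        linarith
  have hlam : 1 < 1 / lam := by rw [lt_div_iff₀ h0]; linarith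
  obtain ⟨J, hJ⟩ := pow_unbounded_of_one_lt (M / ε) hlam
  refine ⟨G0 ∪ (Finset.range J).biUnion fun j => GG lam G0 Dl (j+1), ?_⟩
  intro k x hx hxM
  rcases inv k x hx with h | ⟨j, hj, hje⟩
  · exact Finset.mem_union_left _ h
  · refine Finset.mem_union_right _ (Finset.mem_biUnion.2 ⟨j, Finset.mem_range.2 ?_, hj⟩)
    by_contra hcon
    push Not at hcon
    have h1 : (1/lam)^J ≤ (1/lam)^j := pow_le_pow_right₀ hlam.le hcon
    have h2 : M / ε < (1/lam)^j := hJ.trans_le h1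
    rw [div_lt_iff₀ hε] at h2
    nlinarith

lemma classA_finite_type (lam : ℝ) (n m : ℕ) (b : ℕ → ℝ) (h0 : 0 < lam) (h1 : lam < 1)
    (hmn : m + 2 ≤ n) (hb0 : b 0 = 0) (hbn : b (n-1) = 1 - lam)
    (hinc : ∀ i, i + 1 < n → b i < b (i + 1))
    (hov : ∀ i, i + 1 < n →
      (Set.Icc (b i) (b i + lam) ∩ Set.Icc (b (i + 1)) (b (i + 1) + lam)).Nonempty →
        volume (Set.Icc (b i) (b i + lam) ∩ Set.Icc (b (i + 1)) (b (i + 1) + lam)) = 0 ∨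
        volume (Set.Icc (b i) (b i + lam) ∩ Set.Icc (b (i + 1)) (b (i + 1) + lam)) =
          ENNReal.ofReal (lam * lam))
    (hcard : {i : ℕ | i + 1 < n ∧
      volume (Set.Icc (b i) (b i + lam) ∩ Set.Icc (b (i + 1)) (b (i + 1) + lam)) =
        ENNReal.ofReal (lam * lam)}.ncard = m) (M : ℝ) :
    ∃ G : Finset ℝ, ∀ k, ∀ x ∈ DD lam {β | ∃ i < n, ∃ j < n, β = b i - b j} k,
      |x| ≤ M → x ∈ G := by
  have hint : ∀ i, i + 1 < n → Set.Icc (b i) (b i + lam) ∩ Set.Icc (b (i + 1)) (b (i + 1) + lam)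
      = Set.Icc (b (i+1)) (b i + lam) := by
    intro i hi
    rw [Set.Icc_inter_Icc, sup_eq_right.2 (hinc i hi).le,
      inf_eq_left.2 (by linarith [hinc i hi])]
  have hstep' : ∀ i, i + 1 < n → (volume (Set.Icc (b i) (b i + lam) ∩ Set.Icc (b (i + 1)) (b (i + 1) + lam)) =
        ENNReal.ofReal (lam * lam) ∧ b (i+1) - b i = lam * (1 - lam)) ∨ lam ≤ b (i+1) - b i := by
    intro i hi
    have h := hov i hi
    rw [hint i hi] at h ⊢
    by_cases hne : b (i+1) ≤ b i + lam
    · rcases h (Set.nonempty_Icc.2 hne) with h | h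
      · right
        rw [Real.volume_Icc, ENNReal.ofReal_eq_zero] at h
        linarith
      · left
        refine ⟨h, ?_⟩
        rw [Real.volume_Icc, ENNReal.ofReal_eq_ofReal_iff (by linarith) (by positivity)] at h
        linarith
    · right; linarith
  have hstep : ∀ i, i + 1 < n → b (i+1) - b i = lam * (1 - lam) ∨ lam ≤ b (i+1) - b i :=
    fun i hi => (hstep' i hi).imp (fun h => h.2) id
  have hmono : ∀ i j, i ≤ j → j < n → b i ≤ b j := by
    intro i j hij
    induction j, hij using Nat.le_induction with
    | base => intro _; exact le_rfl
    | succ j hij ih => intro h; exact (ih (by omega)).trans (hinc j h).le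
  have hhalf : lam ≤ 1 / 2 := by
    have : ∃ i, i + 1 < n ∧ ¬ (volume (Set.Icc (b i) (b i + lam) ∩ Set.Icc (b (i + 1)) (b (i + 1) + lam)) =
        ENNReal.ofReal (lam * lam)) := by
      by_contra hcon
      push Not at hcon
      have : {i : ℕ | i + 1 < n ∧
        volume (Set.Icc (b i) (b i + lam) ∩ Set.Icc (b (i + 1)) (b (i + 1) + lam)) =
        ENNReal.ofReal (lam * lam)} = ((Finset.range (n-1) : Finset ℕ) : Set ℕ) := by
        ext i
        simp only [Set.mem_ofPred_eq, Finset.coe_range, Set.mem_Iio]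
        exact ⟨fun h => by omega, fun h => ⟨by omega, hcon i (by omega)⟩⟩
      rw [this, Set.ncard_coe_finset, Finset.card_range] at hcard
      omega
    obtain ⟨i, hi, hne⟩ := this
    rcases hstep' i hi with h | h
    · exact absurd h.1 hne
    · have h1 := hmono 0 i (by omega) (by omega)
      have h2 := hmono (i+1) (n-1) (by omega) (by omega)
      linarith
  have hq : lam ≤ 2 * (lam * (1 - lam)) := by nlinarith
  have hq2 : lam * (1 - lam) ≤ lam := by nlinarith
  have hq3 : 0 < lam * (1 - lam) := by nlinarith
  have hpair : ∀ i j, i ≤ j → j < n → b j - b i = 0 ∨ b j - b i = lam * (1-lam) ∨ lam ≤ b j - b i := by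
    intro i j hij hj
    rcases Nat.lt_or_ge j (i+2) with h | h
    · have : j = i ∨ j = i + 1 := by omega
      rcases this with rfl | rfl
      · left; ring
      · right; exact hstep i hj
    · right; right
      have e1 := hstep i (by omega)
      have e2 := hstep (i+1) (by omega)
      have e3 := hmono (i+1+1) j (by omega) hj
      rcases e1 with e1 | e1 <;> rcases e2 with e2 | e2 <;> linarith
  -- properties of differences
  have hβ : ∀ β, (∃ i < n, ∃ j < n, β = b i - b j) →
      (|β| = 0 ∨ |β| = lam * (1-lam) ∨ lam ≤ |β|) ∧ |β| ≤ 1 - lam ∧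
      (1 - lam - |β| = 0 ∨ 1 - lam - |β| = lam * (1-lam) ∨ lam ≤ 1 - lam - |β|) := by
    have key : ∀ i j, i ≤ j → j < n → (|b j - b i| = 0 ∨ |b j - b i| = lam * (1-lam) ∨ lam ≤ |b j - b i|) ∧
        |b j - b i| ≤ 1 - lam ∧
      (1 - lam - |b j - b i| = 0 ∨ 1 - lam - |b j - b i| = lam * (1-lam) ∨ lam ≤ 1 - lam - |b j - b i|) := by
      intro i j hij hj
      rw [abs_of_nonneg (by linarith [hmono i j hij hj])]
      have e1 := hpair 0 i (by omega) (by omega)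
      have e2 := hpair j (n-1) (by omega) (by omega)
      have e3 := hmono 0 i (by omega) (by omega)
      have e4 := hmono j (n-1) (by omega) (by omega)
      refine ⟨hpair i j hij hj, by linarith, ?_⟩
      rcases e1 with e1 | e1 | e1 <;> rcases e2 with e2 | e2 | e2 <;>
        first
        | (left; linarith)
        | (right; left; linarith)
        | (right; right; linarith)
    rintro β ⟨i, hi, j, hj, rfl⟩
    rcases le_total i j with h | h
    · rw [abs_sub_comm]; exact key i j h hj
    · exact key j i h hi
  let Dl : Finset ℝ := ((Finset.range n) ×ˢ (Finset.range n)).image fun p => b p.1 - b p.2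
  have hDl : (Dl : Set ℝ) = {β | ∃ i < n, ∃ j < n, β = b i - b j} := by
    ext β
    simp only [Dl, Finset.coe_image, Set.mem_image, Finset.mem_coe, Finset.mem_product,
      Finset.mem_range, Set.mem_ofPred_eq, Prod.exists]
    constructor
    · rintro ⟨i, j, ⟨hi, hj⟩, rfl⟩; exact ⟨i, hi, j, hj, rfl⟩
    · rintro ⟨i, hi, j, hj, rfl⟩; exact ⟨i, j, ⟨hi, hj⟩, rfl⟩
  rw [← hDl]
  have hmem : ∀ β ∈ Dl, ∃ i < n, ∃ j < n, β = b i - b j := fun β h => by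
    have : β ∈ (Dl : Set ℝ) := h
    rw [hDl] at this; exact this
  refine finite_type_abs lam h0 h1 {0, 1 - lam, -(1 - lam), 1, -1} Dl (by simp) ?_
    (fun β h => (hβ β (hmem β h)).2.1) M
  intro d hd β hb
  obtain ⟨p1, p2, p3⟩ := hβ β (hmem β hb)
  have claim : |d + β| = 0 ∨ |d + β| = lam * (1 - lam) ∨ lam ≤ |d + β| := by
    simp only [Finset.mem_insert, Finset.mem_singleton] at hd
    rcases hd with rfl | rfl | rfl | rfl | rfl
    · simpa using p1
    · rcases le_total 0 β with h | h
      · right; right; rw [abs_of_nonneg (by linarith)]; linarith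
      · rw [abs_of_nonpos h] at p2 p3
        rw [abs_of_nonneg (by linarith)]
        simpa using p3
    · rcases le_total 0 β with h | h
      · rw [abs_of_nonneg h] at p2 p3
        rw [abs_of_nonpos (by linarith), show -(-(1 - lam) + β) = 1 - lam - β by ring]
        exact p3
      · right; right; rw [abs_of_nonpos (by linarith)]; linarith
    · right; right
      have := neg_abs_le β
      rw [abs_of_nonneg (by linarith)]; linarith
    · right; right
      have := le_abs_self β
      rw [abs_of_nonpos (by linarith)]; linarith
  simp only [Finset.mem_insert, Finset.mem_singleton]
  rcases claim with h | h | h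
  · left; left; rw [abs_eq_zero.1 h]; simp
  · left
    rcases (abs_eq hq3.le).1 h with h | h
    · right; left; rw [h]; field_simp
    · right; right; left; rw [h]; field_simp
  · rcases h.lt_or_eq with h | h
    · right; rw [abs_div, abs_of_pos h0, lt_div_iff₀ h0]; linarith
    · left
      rcases (abs_eq h0.le).1 h.symm with h | h
      · right; right; right; left; rw [h]; field_simp
      · right; right; right; right; rw [h]; field_simp

lemma similitude_measure {X Y : Type*} [MetricSpace X] [MetricSpace Y] [MeasurableSpace X]
    [BorelSpace X] [MeasurableSpace Y] [BorelSpace Y] (h : X → Y) (r : ℝ) (hr : 0 < r)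
    (hh : ∀ x y, dist (h x) (h y) = r * dist x y) (s : ℝ) (hs : 0 ≤ s) (A : Set X) :
    μH[s] (h '' A) = ENNReal.ofReal r ^ s * μH[s] A := by
  apply le_antisymm
  · have : LipschitzWith r.toNNReal h := LipschitzWith.of_dist_le_mul fun x y => by
      rw [hh, Real.coe_toNNReal _ hr.le]
    exact (this.lipschitzOnWith (s := A)).hausdorffMeasure_image_le hs
  · have : AntilipschitzWith r⁻¹.toNNReal h := AntilipschitzWith.of_le_mul_dist fun x y => by
      rw [hh, Real.coe_toNNReal _ (inv_pos.2 hr).le]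
      exact (by field_simp : dist x y = r⁻¹ * (r * dist x y)).le
    have h2 := this.le_hausdorffMeasure_image hs A
    calc ENNReal.ofReal r ^ s * μH[s] A
        ≤ ENNReal.ofReal r ^ s * (ENNReal.ofReal r⁻¹ ^ s * μH[s] (h '' A)) := by
          gcongr; exact h2
      _ = μH[s] (h '' A) := by
        rw [← mul_assoc, ← ENNReal.mul_rpow_of_nonneg _ _ hs, ← ENNReal.ofReal_mul hr.le,
          mul_inv_cancel₀ hr.ne']
        simp

def OO (lam : ℝ) (b : ℕ → ℝ) (n : ℕ) : ℕ → Set ℝ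
  | 0 => {0}
  | k + 1 => {x | ∃ o ∈ OO lam b n k, ∃ i < n, x = o + lam ^ k * b i}

lemma OO_diff (lam : ℝ) (h0 : 0 < lam) (b : ℕ → ℝ) (n : ℕ) (k : ℕ) :
    ∀ o ∈ OO lam b n k, ∀ o' ∈ OO lam b n k,
      (o - o') / lam ^ k ∈ DD lam {β | ∃ i < n, ∃ j < n, β = b i - b j} k := by
  induction k with
  | zero =>
    intro o ho o' ho'
    rw [show o = 0 from ho, show o' = 0 from ho']
    change _ = _
    simp
  | succ k ih =>
    rintro _ ⟨o, ho, i, hi, rfl⟩ _ ⟨o', ho', j, hj, rfl⟩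
    refine ⟨_, ih o ho o' ho', b i - b j, ⟨i, hi, j, hj, rfl⟩, ?_⟩
    field_simp
    ring

lemma OO_attr (lam : ℝ) (b : ℕ → ℝ) (n : ℕ) (E : Set ℝ)
    (hE : E = ⋃ i ∈ Finset.range n, (fun x => lam * x + b i) '' E) (k : ℕ) (y : ℝ) :
    y ∈ E ↔ ∃ o ∈ OO lam b n k, ∃ x ∈ E, y = lam ^ k * x + o := by
  have hE' : ∀ y, y ∈ E ↔ ∃ i < n, ∃ x ∈ E, y = lam * x + b i := by
    intro y
    conv_lhs => rw [hE]
    simp only [Set.mem_iUnion, Finset.mem_range, Set.mem_image, exists_prop, eq_comm]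
  induction k generalizing y with
  | zero =>
    constructor
    · intro h; exact ⟨0, rfl, y, h, by simp⟩
    · rintro ⟨o, ho, x, hx, rfl⟩
      rw [show o = 0 from ho]; simpa using hx
  | succ k ih =>
    refine (ih y).trans ?_
    constructor
    · rintro ⟨o, ho, x, hx, rfl⟩
      obtain ⟨i, hi, z, hz, rfl⟩ := (hE' x).1 hx
      exact ⟨_, ⟨o, ho, i, hi, rfl⟩, z, hz, by ring⟩
    · rintro ⟨_, ⟨o, ho, i, hi, rfl⟩, z, hz, rfl⟩
      exact ⟨o, ho, lam * z + b i, (hE' _).2 ⟨i, hi, z, hz, rfl⟩, by ring⟩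

lemma pieces (lam : ℝ) (h0 : 0 < lam) (b : ℕ → ℝ) (n : ℕ) (E : Set ℝ)
    (hE : E = ⋃ i ∈ Finset.range n, (fun x => lam * x + b i) '' E)
    (hfin : ∀ M : ℝ, ∃ G : Finset ℝ, ∀ k,
      ∀ x ∈ DD lam {β | ∃ i < n, ∃ j < n, β = b i - b j} k, |x| ≤ M → x ∈ G)
    (Q : ℝ) (hQ : ∀ x ∈ E, ∀ y ∈ E, |x - y| ≤ Q) (s : ℝ) (hs : 0 ≤ s) (L : ℝ) :
    ∃ Θ : Finset ENNReal, ∀ k, ∀ A ⊆ E, A.Nonempty →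
      (∀ x ∈ A, ∀ y ∈ E, |x - y| ≤ Q * lam ^ k → y ∈ A) →
      (∀ x ∈ A, ∀ y ∈ A, |x - y| ≤ L * lam ^ k) →
      ∃ θ ∈ Θ, μH[s] A = ENNReal.ofReal (lam ^ k) ^ s * θ := by
  classical
  obtain ⟨G, hG⟩ := hfin (L + Q)
  refine ⟨G.powerset.image fun S => μH[s] {z | ∃ d ∈ S, ∃ x ∈ E, z = x + d}, ?_⟩
  intro k A hAE hAne hsep hdiam
  have hk : 0 < lam ^ k := pow_pos h0 k
  obtain ⟨a, ha⟩ := hAne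
  obtain ⟨o₀, ho₀, x₀, hx₀, hax⟩ := (OO_attr lam b n E hE k a).1 (hAE ha)
  let S : Finset ℝ := G.filter fun d => ∃ o ∈ OO lam b n k, d = (o - o₀) / lam ^ k ∧
    ∃ x ∈ E, lam ^ k * x + o ∈ A
  refine ⟨_, Finset.mem_image.2 ⟨S, Finset.mem_powerset.2 (Finset.filter_subset _ _), rfl⟩, ?_⟩
  rw [← similitude_measure (fun z : ℝ => lam ^ k * z + o₀) (lam ^ k) hk ?_ s hs]
  · congr 1
    ext y
    constructor
    · intro hy
      obtain ⟨o, ho, x, hx, rfl⟩ := (OO_attr lam b n E hE k y).1 (hAE hy)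
      refine ⟨x + (o - o₀) / lam ^ k, ⟨(o - o₀) / lam ^ k, ?_, x, hx, rfl⟩, ?_⟩
      · refine Finset.mem_filter.2 ⟨?_, o, ho, rfl, x, hx, hy⟩
        apply hG k _ (OO_diff lam h0 b n k o ho o₀ ho₀)
        rw [abs_div, abs_of_pos hk, div_le_iff₀ hk]
        have e1 := hdiam _ hy _ ha
        have e2 := hQ x₀ hx₀ x hx
        have : o - o₀ = (lam ^ k * x + o - a) + lam ^ k * (x₀ - x) := by rw [hax]; ring
        rw [this]
        refine (abs_add_le _ _).trans ?_
        rw [abs_mul, abs_of_pos hk]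
        nlinarith
      · change lam ^ k * (x + (o - o₀) / lam ^ k) + o₀ = _
        field_simp
        ring
    · rintro ⟨_, ⟨d, hd, x, hx, rfl⟩, rfl⟩
      obtain ⟨-, o, ho, rfl, x', hx', hxA⟩ := Finset.mem_filter.1 hd
      have e : lam ^ k * (x + (o - o₀) / lam ^ k) + o₀ = lam ^ k * x + o := by
        field_simp; ring
      change lam ^ k * (x + (o - o₀) / lam ^ k) + o₀ ∈ A
      rw [e]
      refine hsep _ hxA _ ((OO_attr lam b n E hE k _).2 ⟨o, ho, x, hx, rfl⟩) ?_
      rw [show lam ^ k * x' + o - (lam ^ k * x + o) = lam ^ k * (x' - x) by ring, abs_mul,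
        abs_of_pos hk, mul_comm]
      exact mul_le_mul_of_nonneg_right (hQ _ hx' _ hx) hk.le
  · intro x y
    rw [Real.dist_eq, Real.dist_eq, show lam ^ k * x + o₀ - (lam ^ k * y + o₀) = lam ^ k * (x - y) by ring, abs_mul, abs_of_pos hk]

lemma constant_ratio {ι : Type*} [Fintype ι] (ρ : List ι → ℝ) (hpos : ∀ w, 0 < ρ w)
    (hbdd : BddAbove (Set.range ρ)) (p : ι → ℝ) (hp : ∀ j, 0 < p j) (hp1 : ∑ j, p j = 1)
    (hav : ∀ w, ρ w = ∑ j, p j * ρ (w ++ [j])) (Q : Finset ℝ)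
    (hQ : ∀ w j, ρ (w ++ [j]) / ρ w ∈ Q) : ∃ w, ∀ v, ρ (w ++ v) = ρ w := by
  obtain ⟨ε, hε, hgap⟩ := finite_gap (Q.image fun q => q - 1)
  set D := sSup (Set.range ρ) with hD
  have hle : ∀ w, ρ w ≤ D := fun w => le_csSup hbdd ⟨w, rfl⟩
  have hDpos : 0 < D := (hpos []).trans_le (hle [])
  obtain ⟨_, ⟨w, rfl⟩, hw⟩ := exists_lt_of_lt_csSup (Set.range_nonempty ρ)
    (show D / (1 + ε) < D from div_lt_self hDpos (by linarith))
  refine ⟨w, fun v => ?_⟩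
  induction v using List.reverseRecOn with
  | nil => simp
  | append_singleton v j ih =>
    rw [← List.append_assoc]
    set u := w ++ v with hu
    rw [← ih] at hw ⊢
    have hj : ∀ j, ρ (u ++ [j]) ≤ ρ u := by
      intro j
      by_contra hcon
      push Not at hcon
      have h1 : 1 < ρ (u ++ [j]) / ρ u := by rwa [lt_div_iff₀ (hpos u), one_mul]
      have h2 := hgap _ (Finset.mem_image.2 ⟨_, hQ u j, rfl⟩) (by linarith)
      have h3 : 1 + ε ≤ ρ (u ++ [j]) / ρ u := by linarith
      rw [le_div_iff₀ (hpos u)] at h3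
      rw [div_lt_iff₀ (by linarith)] at hw
      linarith [hle (u ++ [j])]
    have hz : ∑ j, p j * (ρ u - ρ (u ++ [j])) = 0 := by
      simp only [mul_sub, Finset.sum_sub_distrib, ← Finset.sum_mul, hp1, ← hav u]
      ring
    rw [Finset.sum_eq_zero_iff_of_nonneg
      (fun j _ => mul_nonneg (hp j).le (sub_nonneg.2 (hj j)))] at hz
    have := hz j (Finset.mem_univ _)
    rcases mul_eq_zero.1 this with h | h
    · exact absurd h (hp j).ne'
    · linarith

section cyl
set_option linter.unusedSectionVars false
variable {X : Type*} [MetricSpace X] {t : ℕ} (g : Fin t → X → X) (r : Fin t → ℝ) (F : Set X)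

lemma g_inj (hr : ∀ j, r j ∈ Set.Ioo (0 : ℝ) 1)
    (hg : ∀ j x y, dist (g j x) (g j y) = r j * dist x y) (j : Fin t) :
    Function.Injective (g j) := by
  intro x y h
  have := hg j x y
  rw [h, dist_self] at this
  rcases mul_eq_zero.1 this.symm with h | h
  · exact absurd h (hr j).1.ne'
  · exact dist_eq_zero.1 h

lemma g_cont (hr : ∀ j, r j ∈ Set.Ioo (0 : ℝ) 1)
    (hg : ∀ j x y, dist (g j x) (g j y) = r j * dist x y) (j : Fin t) :
    Continuous (g j) := by
  have : LipschitzWith (r j).toNNReal (g j) := LipschitzWith.of_dist_le_mul fun x y => by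
      rw [hg, Real.coe_toNNReal _ (hr j).1.le]
  exact this.continuous

lemma cyl_subset (hF : F = ⋃ j, g j '' F) (w : List (Fin t)) : cylinder g F w ⊆ F := by
  induction w with
  | nil => exact subset_rfl
  | cons j w ih =>
    intro x hx
    rw [hF]
    exact Set.mem_iUnion.2 ⟨j, Set.image_mono ih hx⟩

lemma cyl_nonempty (hF : F.Nonempty) (w : List (Fin t)) : (cylinder g F w).Nonempty := by
  induction w with
  | nil => exact hF
  | cons j w ih => exact ih.image _

lemma cyl_compact (hr : ∀ j, r j ∈ Set.Ioo (0 : ℝ) 1)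
    (hg : ∀ j x y, dist (g j x) (g j y) = r j * dist x y) (hF : IsCompact F)
    (w : List (Fin t)) : IsCompact (cylinder g F w) := by
  induction w with
  | nil => exact hF
  | cons j w ih => exact ih.image (g_cont g r hr hg j)

lemma cyl_snoc (hF : F = ⋃ j, g j '' F) (w : List (Fin t)) :
    cylinder g F w = ⋃ j, cylinder g F (w ++ [j]) := by
  induction w with
  | nil => exact hF
  | cons i w ih =>
    change g i '' _ = ⋃ j, g i '' _
    rw [ih, Set.image_iUnion]
    rfl

lemma cyl_snoc_disj (hr : ∀ j, r j ∈ Set.Ioo (0 : ℝ) 1)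
    (hg : ∀ j x y, dist (g j x) (g j y) = r j * dist x y)
    (hsep : ∀ j j', j ≠ j' → Disjoint (g j '' F) (g j' '' F)) (w : List (Fin t))
    (j j' : Fin t) (h : j ≠ j') :
    Disjoint (cylinder g F (w ++ [j])) (cylinder g F (w ++ [j'])) := by
  induction w with
  | nil => exact hsep j j' h
  | cons i w ih => exact (Set.disjoint_image_iff (g_inj g r hr hg i)).2 ih

lemma cyl_nested (hr : ∀ j, r j ∈ Set.Ioo (0 : ℝ) 1)
    (hg : ∀ j x y, dist (g j x) (g j y) = r j * dist x y) (hF : F = ⋃ j, g j '' F)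
    (hsep : ∀ j j', j ≠ j' → Disjoint (g j '' F) (g j' '' F)) (u v : List (Fin t)) :
    Disjoint (cylinder g F u) (cylinder g F v) ∨ cylinder g F u ⊆ cylinder g F v ∨
      cylinder g F v ⊆ cylinder g F u := by
  induction u generalizing v with
  | nil => exact Or.inr (Or.inr (cyl_subset g F hF v))
  | cons i u ih =>
    cases v with
    | nil => exact Or.inr (Or.inl (cyl_subset g F hF (i :: u)))
    | cons j v =>
      by_cases hij : i = j
      · subst hij
        rcases ih v with h | h | h
        · exact Or.inl ((Set.disjoint_image_iff (g_inj g r hr hg i)).2 h)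
        · exact Or.inr (Or.inl (Set.image_mono h))
        · exact Or.inr (Or.inr (Set.image_mono h))
      · left
        exact (hsep i j hij).mono (Set.image_mono (cyl_subset g F hF u))
          (Set.image_mono (cyl_subset g F hF v))

lemma cyl_word (hF : F = ⋃ j, g j '' F) (w : List (Fin t)) (x : X) (hx : x ∈ cylinder g F w)
    (k : ℕ) : ∃ v : List (Fin t), v.length = k ∧ x ∈ cylinder g F (w ++ v) := by
  induction k with
  | zero => exact ⟨[], rfl, by simpa using hx⟩
  | succ k ih =>
    obtain ⟨v, hv, hxv⟩ := ih
    rw [cyl_snoc g F hF] at hxv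
    obtain ⟨j, hj⟩ := Set.mem_iUnion.1 hxv
    exact ⟨v ++ [j], by simp [hv], by simpa using hj⟩

lemma R_pos (hr : ∀ j, r j ∈ Set.Ioo (0 : ℝ) 1) (w : List (Fin t)) : 0 < (w.map r).prod := by
  induction w with
  | nil => simp
  | cons j w ih => rw [List.map_cons, List.prod_cons]; exact mul_pos (hr j).1 ih

lemma R_le_one (hr : ∀ j, r j ∈ Set.Ioo (0 : ℝ) 1) (w : List (Fin t)) : (w.map r).prod ≤ 1 := by
  induction w with
  | nil => simp
  | cons j w ih =>
    rw [List.map_cons, List.prod_cons]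
    exact mul_le_one₀ (hr j).2.le (R_pos r hr w).le ih

lemma exists_ratio_bound (hr : ∀ j, r j ∈ Set.Ioo (0 : ℝ) 1) :
    ∃ q : ℝ, 0 < q ∧ q < 1 ∧ ∀ j, r j ≤ q := by
  obtain ⟨ε, hε, h⟩ := finite_gap (Finset.univ.image fun j => 1 - r j)
  refine ⟨max (1/2) (1 - ε), by simp, by simp; constructor <;> linarith, fun j => ?_⟩
  have := h _ (Finset.mem_image.2 ⟨j, Finset.mem_univ _, rfl⟩) (by linarith [(hr j).2])
  exact le_max_of_le_right (by linarith)

lemma R_le_pow (hr : ∀ j, r j ∈ Set.Ioo (0 : ℝ) 1) (q : ℝ) (hq : ∀ j, r j ≤ q)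
    (w : List (Fin t)) : (w.map r).prod ≤ q ^ w.length := by
  induction w with
  | nil => simp
  | cons j w ih =>
    rw [List.map_cons, List.prod_cons, List.length_cons, pow_succ, mul_comm]
    exact mul_le_mul ih (hq j) (hr j).1.le ((R_pos r hr w).le.trans ih)

lemma cyl_dist (hr : ∀ j, r j ∈ Set.Ioo (0 : ℝ) 1)
    (hg : ∀ j x y, dist (g j x) (g j y) = r j * dist x y) (Δ : ℝ)
    (hΔ : ∀ x ∈ F, ∀ y ∈ F, dist x y ≤ Δ) (w : List (Fin t)) :
    ∀ x ∈ cylinder g F w, ∀ y ∈ cylinder g F w, dist x y ≤ (w.map r).prod * Δ := by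
  induction w with
  | nil => simpa [_root_.cylinder] using hΔ
  | cons j w ih =>
    rintro _ ⟨x, hx, rfl⟩ _ ⟨y, hy, rfl⟩
    rw [hg, List.map_cons, List.prod_cons, mul_assoc]
    exact mul_le_mul_of_nonneg_left (ih x hx y hy) (hr j).1.le

lemma exists_sep (hr : ∀ j, r j ∈ Set.Ioo (0 : ℝ) 1)
    (hg : ∀ j x y, dist (g j x) (g j y) = r j * dist x y) (hFc : IsCompact F)
    (hsep : ∀ j j', j ≠ j' → Disjoint (g j '' F) (g j' '' F)) :
    ∃ δ > 0, ∀ j j', j ≠ j' → ∀ x ∈ F, ∀ y ∈ F, δ ≤ dist (g j x) (g j' y) := by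
  have h1 : ∀ p : Fin t × Fin t, ∃ δ : ℝ, 0 < δ ∧ (p.1 ≠ p.2 → ∀ x ∈ F, ∀ y ∈ F,
      δ ≤ dist (g p.1 x) (g p.2 y)) := by
    rintro ⟨j, j'⟩
    by_cases h : j = j'
    · exact ⟨1, one_pos, fun h' => absurd h h'⟩
    · obtain ⟨δ, hδ, hd⟩ := (hsep j j' h).exists_thickenings
        (hFc.image (g_cont g r hr hg j)) (hFc.image (g_cont g r hr hg j')).isClosed
      refine ⟨δ, hδ, fun _ x hx y hy => ?_⟩
      by_contra hcon
      push Not at hcon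
      refine Set.disjoint_left.1 hd (?_ : g j' y ∈ _) ?_
      · rw [Metric.mem_thickening_iff]
        exact ⟨g j x, ⟨x, hx, rfl⟩, by rwa [dist_comm]⟩
      · exact Metric.self_subset_thickening hδ _ ⟨y, hy, rfl⟩
  choose δ hδ h using h1
  obtain ⟨ε, hε, hgap⟩ := finite_gap (Finset.univ.image δ)
  refine ⟨ε, hε, fun j j' hj x hx y hy => ?_⟩
  exact (hgap _ (Finset.mem_image.2 ⟨(j, j'), Finset.mem_univ _, rfl⟩) (hδ _)).trans
    (h (j, j') hj x hx y hy)

lemma cyl_sep (hr : ∀ j, r j ∈ Set.Ioo (0 : ℝ) 1)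
    (hg : ∀ j x y, dist (g j x) (g j y) = r j * dist x y) (hF : F = ⋃ j, g j '' F)
    (δ : ℝ) (hδ : 0 < δ)
    (hsep : ∀ j j', j ≠ j' → ∀ x ∈ F, ∀ y ∈ F, δ ≤ dist (g j x) (g j' y)) (w : List (Fin t)) :
    ∀ x ∈ cylinder g F w, ∀ y ∈ F, y ∉ cylinder g F w → (w.map r).prod * δ ≤ dist x y := by
  induction w with
  | nil => intro x _ y hy hy'; exact absurd hy hy'
  | cons j w ih =>
    rintro _ ⟨x, hx, rfl⟩ y hy hny
    rw [hF] at hy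
    obtain ⟨j', z, hz, rfl⟩ := Set.mem_iUnion.1 hy
    by_cases hj : j = j'
    · subst hj
      rw [hg, List.map_cons, List.prod_cons, mul_assoc]
      refine mul_le_mul_of_nonneg_left (ih x hx z hz ?_) (hr j).1.le
      exact fun h => hny ⟨z, h, rfl⟩
    · refine le_trans ?_ (hsep j j' hj x (cyl_subset g F hF w hx) z hz)
      exact mul_le_of_le_one_left hδ.le (R_le_one r hr _)

lemma cyl_measure [MeasurableSpace X] [BorelSpace X] (hr : ∀ j, r j ∈ Set.Ioo (0 : ℝ) 1)
    (hg : ∀ j x y, dist (g j x) (g j y) = r j * dist x y) (s : ℝ) (hs : 0 ≤ s)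
    (w : List (Fin t)) :
    μH[s] (cylinder g F w) = ENNReal.ofReal (w.map r).prod ^ s * μH[s] F := by
  induction w with
  | nil => simp [_root_.cylinder]
  | cons j w ih =>
    change μH[s] (g j '' _) = _
    rw [similitude_measure (g j) (r j) (hr j).1 (hg j) s hs, ih, List.map_cons, List.prod_cons,
      ENNReal.ofReal_mul (hr j).1.le, ENNReal.mul_rpow_of_nonneg _ _ hs, mul_assoc]

/-- Upper bound. -/
lemma measure_lt_top [MeasurableSpace X] [BorelSpace X] (hr : ∀ j, r j ∈ Set.Ioo (0 : ℝ) 1)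
    (hg : ∀ j x y, dist (g j x) (g j y) = r j * dist x y) (hFc : IsCompact F)
    (hF : F = ⋃ j, g j '' F) (s : ℝ) (hs : 0 ≤ s) (hsum : ∑ j, r j ^ s ≤ 1) :
    μH[s] F < ⊤ := by
  obtain ⟨q, hq0, hq1, hq⟩ := exists_ratio_bound r hr
  obtain ⟨Δ, hΔ⟩ := Metric.isBounded_iff.1 hFc.isBounded
  set Δ' := max Δ 0 with hΔ'
  have hΔ2 : ∀ x ∈ F, ∀ y ∈ F, dist x y ≤ Δ' := fun x hx y hy => (hΔ hx hy).trans (le_max_left _ _)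
  have hΔ0 : 0 ≤ Δ' := le_max_right _ _
  have hdiam : ∀ w, Metric.ediam (cylinder g F w) ≤ ENNReal.ofReal ((w.map r).prod * Δ') := by
    intro w
    refine Metric.ediam_le fun x hx y hy => ?_
    rw [edist_dist]
    exact ENNReal.ofReal_le_ofReal (cyl_dist g r F hr hg Δ' hΔ2 w x hx y hy)
  have hlim : Filter.Tendsto (fun k : ℕ => ENNReal.ofReal (q ^ k * Δ')) Filter.atTop (nhds 0) := by
    have : Filter.Tendsto (fun k : ℕ => q ^ k * Δ') Filter.atTop (nhds 0) := by
      simpa using (tendsto_pow_atTop_nhds_zero_of_lt_one hq0.le hq1).mul_const Δ'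
    simpa using ENNReal.tendsto_ofReal this
  have h := Measure.hausdorffMeasure_le_liminf_sum (X := X) (ι := fun k : ℕ => (Fin k → Fin t)) s F
    (l := Filter.atTop) (fun k : ℕ => ENNReal.ofReal (q ^ k * Δ')) hlim
    (fun k p => cylinder g F (List.ofFn p)) ?_ ?_
  · refine h.trans_lt ?_
    refine lt_of_le_of_lt (b := ENNReal.ofReal Δ' ^ s) ?_ (ENNReal.rpow_lt_top_of_nonneg hs (by simp))
    refine (Filter.liminf_le_liminf (v := fun _ => ENNReal.ofReal Δ' ^ s) ?_).trans ?_
    · refine Filter.Eventually.of_forall fun k => ?_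
      have e1 : ∀ p : Fin k → Fin t, Metric.ediam (cylinder g F (List.ofFn p)) ^ s ≤
          ENNReal.ofReal (∏ i, r (p i) ^ s) * ENNReal.ofReal Δ' ^ s := by
        intro p
        refine (ENNReal.rpow_le_rpow (hdiam _) hs).trans (le_of_eq ?_)
        rw [ENNReal.ofReal_mul (R_pos r hr _).le, ENNReal.mul_rpow_of_nonneg _ _ hs]
        congr 1
        rw [List.map_ofFn, List.prod_ofFn]
        simp only [Function.comp]
        rw [ENNReal.ofReal_rpow_of_nonneg
          (Finset.prod_nonneg fun i _ => (hr _).1.le) hs,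
          Real.finsetProd_rpow _ _ (fun i _ => (hr _).1.le)]
      refine (Finset.sum_le_sum fun p _ => e1 p).trans ?_
      rw [← Finset.sum_mul, ← ENNReal.ofReal_sum_of_nonneg
        (fun p _ => Finset.prod_nonneg fun i _ => Real.rpow_nonneg (hr _).1.le _), ← Fintype.sum_pow (fun j => r j ^ s)]
      refine mul_le_of_le_one_left (by positivity) ?_
      rw [← ENNReal.ofReal_one]
      apply ENNReal.ofReal_le_ofReal
      exact pow_le_one₀ (Finset.sum_nonneg fun j _ => Real.rpow_nonneg (hr j).1.le _) hsum
    · simp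
  · refine Filter.Eventually.of_forall fun k p => (hdiam _).trans (ENNReal.ofReal_le_ofReal ?_)
    refine mul_le_mul_of_nonneg_right ?_ hΔ0
    simpa using R_le_pow r hr q hq (List.ofFn p)
  · refine Filter.Eventually.of_forall fun k x hx => ?_
    obtain ⟨v, hv, hxv⟩ := cyl_word g F hF [] x hx k
    subst hv
    refine Set.mem_iUnion.2 ⟨v.get, ?_⟩
    rw [List.ofFn_get]
    exact hxv

end cyl

section lower
set_option linter.unusedSectionVars false
variable {X : Type*} [MetricSpace X] {t : ℕ} (g : Fin t → X → X) (r : Fin t → ℝ) (F : Set X)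

lemma exists_coding (hr : ∀ j, r j ∈ Set.Ioo (0 : ℝ) 1)
    (hg : ∀ j x y, dist (g j x) (g j y) = r j * dist x y) (hFne : F.Nonempty)
    (hFc : IsCompact F) (hF : F = ⋃ j, g j '' F) :
    ∃ c : (ℕ → Fin t) → X, Continuous c ∧ (∀ ω, c ω ∈ F) ∧
      ∀ ω, c ω = g (ω 0) (c (fun i => ω (i + 1))) := by
  obtain ⟨q, hq0, hq1, hq⟩ := exists_ratio_bound r hr
  have hmaps : ∀ j, ∀ x : F, g j x ∈ F := by
    intro j x
    refine hF.symm.subset ?_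
    exact Set.mem_iUnion.2 ⟨j, x, x.2, rfl⟩
  have : CompactSpace F := isCompact_iff_compactSpace.1 hFc
  have : Nonempty F := hFne.to_subtype
  have : Nonempty C(ℕ → Fin t, F) := ⟨ContinuousMap.const _ (Classical.arbitrary F)⟩
  have hshift : Continuous fun ω : ℕ → Fin t => fun i => ω (i + 1) := by fun_prop
  have hgc : Continuous fun p : Fin t × F => (⟨g p.1 p.2, hmaps p.1 p.2⟩ : F) := by
    refine Continuous.subtype_mk ?_ _
    rw [continuous_prod_of_discrete_left]
    intro j
    exact (g_cont g r hr hg j).comp continuous_subtype_val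
  let T : C(ℕ → Fin t, F) → C(ℕ → Fin t, F) := fun φ =>
    ⟨fun ω => ⟨g (ω 0) (φ fun i => ω (i + 1)), hmaps _ _⟩,
      hgc.comp ((continuous_apply 0).prodMk (φ.continuous.comp hshift))⟩
  have hT : ContractingWith q.toNNReal T := by
    refine ⟨?_, LipschitzWith.of_dist_le_mul fun φ ψ => ?_⟩
    · rw [Real.toNNReal_lt_one]; exact hq1
    · rw [Real.coe_toNNReal _ hq0.le, ContinuousMap.dist_le (by positivity)]
      intro ω
      change dist (g (ω 0) (φ _)) (g (ω 0) (ψ _)) ≤ _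
      rw [hg]
      exact mul_le_mul (hq _) (ContinuousMap.dist_apply_le_dist (f := φ) (g := ψ) _) dist_nonneg hq0.le
  have hfix := hT.fixedPoint_isFixedPt
  set φ := ContractingWith.fixedPoint T hT
  refine ⟨fun ω => φ ω, continuous_subtype_val.comp φ.continuous, fun ω => (φ ω).2, fun ω => ?_⟩
  have : T φ ω = φ ω := by rw [hfix]
  exact (congrArg Subtype.val this).symm

lemma coding_sep (hr : ∀ j, r j ∈ Set.Ioo (0 : ℝ) 1)
    (hg : ∀ j x y, dist (g j x) (g j y) = r j * dist x y) (δ : ℝ) (hδ : 0 < δ)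
    (hsep : ∀ j j', j ≠ j' → ∀ x ∈ F, ∀ y ∈ F, δ ≤ dist (g j x) (g j' y))
    (c : (ℕ → Fin t) → X) (hcF : ∀ ω, c ω ∈ F)
    (hc : ∀ ω, c ω = g (ω 0) (c (fun i => ω (i + 1)))) (k : ℕ) :
    ∀ ω ω' : ℕ → Fin t, (∃ i ≤ k, ω i ≠ ω' i) →
      δ * ∏ i ∈ Finset.range k, r (ω i) ≤ dist (c ω) (c ω') := by
  have hprod : ∀ (k : ℕ) (ω : ℕ → Fin t), ∏ i ∈ Finset.range k, r (ω i) ≤ 1 := fun k ω =>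
    Finset.prod_le_one (fun i _ => (hr _).1.le) (fun i _ => (hr _).2.le)
  have hbase : ∀ (k : ℕ) (ω ω' : ℕ → Fin t), ω 0 ≠ ω' 0 →
      δ * ∏ i ∈ Finset.range k, r (ω i) ≤ dist (c ω) (c ω') := by
    intro k ω ω' h
    rw [hc ω, hc ω']
    exact (mul_le_of_le_one_right hδ.le (hprod k ω)).trans (hsep _ _ h _ (hcF _) _ (hcF _))
  induction k with
  | zero =>
    rintro ω ω' ⟨i, hi, hne⟩
    obtain rfl : i = 0 := by omega
    exact hbase 0 ω ω' hne
  | succ k ih =>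
    rintro ω ω' ⟨i, hi, hne⟩
    by_cases h0 : ω 0 = ω' 0
    · obtain ⟨i, rfl⟩ : ∃ i', i = i' + 1 := by
        cases i with
        | zero => exact absurd h0 hne
        | succ i => exact ⟨i, rfl⟩
      have := ih (fun i => ω (i+1)) (fun i => ω' (i+1)) ⟨i, by omega, hne⟩
      rw [hc ω, hc ω', ← h0, hg, Finset.prod_range_succ', ← mul_assoc, mul_comm]
      exact mul_le_mul_of_nonneg_left this (hr _).1.le
    · exact hbase _ ω ω' h0

lemma positive_measure [MeasurableSpace X] [BorelSpace X] (hr : ∀ j, r j ∈ Set.Ioo (0 : ℝ) 1)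
    (hg : ∀ j x y, dist (g j x) (g j y) = r j * dist x y) (hFne : F.Nonempty)
    (hFc : IsCompact F) (hF : F = ⋃ j, g j '' F)
    (hsep : ∀ j j', j ≠ j' → Disjoint (g j '' F) (g j' '' F))
    (s : ℝ) (hs : 0 < s) (hsum : 1 ≤ ∑ j, r j ^ s) : μH[s] F ≠ 0 := by
  obtain ⟨q, hq0, hq1, hq⟩ := exists_ratio_bound r hr
  obtain ⟨δ, hδ, hsep'⟩ := exists_sep g r F hr hg hFc hsep
  obtain ⟨c, hcc, hcF, hc⟩ := exists_coding g r F hr hg hFne hFc hF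
  have hcs := coding_sep g r F hr hg δ hδ hsep' c hcF hc
  set S := ∑ j, r j ^ s with hS
  have hS0 : 0 < S := by linarith
  let P : Measure (Fin t) := ∑ j, ENNReal.ofReal (r j ^ s / S) • Measure.dirac j
  have hPj : ∀ j, P {j} = ENNReal.ofReal (r j ^ s / S) := by
    intro j
    simp only [P, Measure.coe_finsetSum, Finset.sum_apply, Measure.smul_apply, smul_eq_mul]
    rw [Finset.sum_eq_single j]
    · simp
    · intro i _ hij
      simp [hij]
    · simp
  have hPle : ∀ j, P {j} ≤ ENNReal.ofReal (r j) ^ s := by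
    intro j
    rw [hPj, ENNReal.ofReal_rpow_of_pos (hr j).1]
    exact ENNReal.ofReal_le_ofReal (div_le_self (Real.rpow_nonneg (hr j).1.le _) hsum)
  have : IsProbabilityMeasure P := by
    constructor
    simp only [P, Measure.coe_finsetSum, Finset.sum_apply, Measure.smul_apply, smul_eq_mul,
      measure_univ, mul_one]
    rw [← ENNReal.ofReal_sum_of_nonneg
      (fun j _ => div_nonneg (Real.rpow_nonneg (hr j).1.le _) hS0.le), ← Finset.sum_div,
      div_self hS0.ne', ENNReal.ofReal_one]
  let μ : Measure (ℕ → Fin t) := Measure.infinitePi fun _ => P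
  have hcm : Measurable c := hcc.measurable
  let ν : Measure X := ENNReal.ofReal δ ^ s • μ.map c
  have hcyl : ∀ (ω : ℕ → Fin t) (k : ℕ), μ {ω' | ∀ i < k, ω' i = ω i} ≤
      ENNReal.ofReal (∏ i ∈ Finset.range k, r (ω i)) ^ s := by
    intro ω k
    have e : {ω' : ℕ → Fin t | ∀ i < k, ω' i = ω i} =
        ((Finset.range k : Finset ℕ) : Set ℕ).pi fun i => {ω i} := by
      ext ω'; simp [Set.mem_pi]
    rw [e, Measure.infinitePi_pi _ (fun i _ => measurableSet_singleton _),
      ENNReal.ofReal_prod_of_nonneg (fun i _ => (hr _).1.le),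
      ← ENNReal.prod_rpow_of_nonneg hs.le]
    exact Finset.prod_le_prod' fun i _ => hPle _
  have hprodle : ∀ (ω : ℕ → Fin t) (k : ℕ), ∏ i ∈ Finset.range k, r (ω i) ≤ q ^ k := by
    intro ω k
    calc ∏ i ∈ Finset.range k, r (ω i) ≤ ∏ i ∈ Finset.range k, q :=
        Finset.prod_le_prod (fun i _ => (hr _).1.le) (fun i _ => hq _)
      _ = q ^ k := by simp
  have hprodpos : ∀ (ω : ℕ → Fin t) (k : ℕ), 0 < ∏ i ∈ Finset.range k, r (ω i) := fun ω k =>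
    Finset.prod_pos fun i _ => (hr _).1
  have hν : ν ≤ μH[s] := by
    refine Measure.le_hausdorffMeasure s ν (ENNReal.ofReal (δ / 2)) (by simpa using hδ) ?_
    intro U hU
    have hcl : ν U ≤ ν (closure U) := measure_mono subset_closure
    refine hcl.trans ?_
    rw [← Metric.ediam_closure U] at hU ⊢
    have hUm : MeasurableSet (closure U) := isClosed_closure.measurableSet
    generalize closure U = V at *
    change ENNReal.ofReal δ ^ s * μ.map c V ≤ _
    rw [Measure.map_apply hcm hUm]
    rcases Set.eq_empty_or_nonempty (c ⁻¹' V) with h | ⟨ω, hω⟩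
    · rw [h]; simp
    have hfinite : Metric.ediam V ≠ ⊤ := ne_top_of_le_ne_top (by simp) hU
    set D := (Metric.ediam V).toReal with hD
    have hDe : Metric.ediam V = ENNReal.ofReal D := (ENNReal.ofReal_toReal hfinite).symm
    have hD0 : 0 ≤ D := ENNReal.toReal_nonneg
    have hDδ : D < δ := by
      rw [hDe, ENNReal.ofReal_le_ofReal_iff (by linarith)] at hU
      linarith
    have hdist : ∀ x ∈ V, ∀ y ∈ V, dist x y ≤ D := by
      intro x hx y hy
      have := Metric.edist_le_ediam_of_mem hx hy
      rw [hDe, edist_dist, ENNReal.ofReal_le_ofReal_iff hD0] at this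
      exact this
    have key : ∀ k, D < δ * ∏ i ∈ Finset.range k, r (ω i) →
        μ (c ⁻¹' V) ≤ ENNReal.ofReal (∏ i ∈ Finset.range (k+1), r (ω i)) ^ s := by
      intro k hk
      refine le_trans (measure_mono ?_) (hcyl ω (k+1))
      intro ω' hω' i hi
      by_contra hne
      have := hcs k ω ω' ⟨i, by omega, fun h => hne h.symm⟩
      linarith [hdist _ hω _ hω']
    rw [hDe]
    rcases hD0.lt_or_eq with hDpos | hDz
    · -- positive diameter
      have hex : ∃ k, δ * ∏ i ∈ Finset.range k, r (ω i) ≤ D := by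
        obtain ⟨k, hk⟩ := exists_pow_lt_of_lt_one (div_pos hDpos hδ) hq1
        refine ⟨k, ?_⟩
        rw [lt_div_iff₀ hδ] at hk
        have := mul_le_mul_of_nonneg_left (hprodle ω k) hδ.le
        linarith
      classical
      have h1 := Nat.find_spec hex
      have h2 : ∀ k < Nat.find hex, ¬ _ := fun k hk => Nat.find_min hex hk
      generalize Nat.find hex = K at h1 h2
      cases K with
      | zero => simp at h1; linarith
      | succ K =>
        have h3 := key K (not_le.1 (h2 K (by omega)))
        calc ENNReal.ofReal δ ^ s * μ (c ⁻¹' V) ≤ ENNReal.ofReal δ ^ s *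
            ENNReal.ofReal (∏ i ∈ Finset.range (K+1), r (ω i)) ^ s := by gcongr
          _ = ENNReal.ofReal (δ * ∏ i ∈ Finset.range (K+1), r (ω i)) ^ s := by
            rw [ENNReal.ofReal_mul hδ.le, ENNReal.mul_rpow_of_nonneg _ _ hs.le]
          _ ≤ ENNReal.ofReal D ^ s := by gcongr
    · have hz : μ (c ⁻¹' V) ≤ 0 := by
        have hlim : Filter.Tendsto (fun k : ℕ => ENNReal.ofReal (q ^ (k+1)) ^ s) Filter.atTop
            (nhds 0) := by
          have h1 : Filter.Tendsto (fun k : ℕ => q ^ (k+1)) Filter.atTop (nhds 0) :=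
            (tendsto_pow_atTop_nhds_zero_of_lt_one hq0.le hq1).comp (Filter.tendsto_add_atTop_nat 1)
          have h2 := ENNReal.tendsto_ofReal h1
          have h3 := (ENNReal.continuous_rpow_const (y := s)).tendsto (ENNReal.ofReal 0)
          have h4 := h3.comp h2
          simpa [ENNReal.zero_rpow_of_pos hs, Function.comp_def] using h4
        refine ge_of_tendsto' hlim fun k => ?_
        refine (key k ?_).trans ?_
        · rw [← hDz]; exact mul_pos hδ (hprodpos ω k)
        · exact ENNReal.rpow_le_rpow (ENNReal.ofReal_le_ofReal (hprodle ω _)) hs.le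
      rw [le_zero_iff.1 hz, mul_zero]
      exact zero_le
  intro h0
  have h1 : ν F ≤ 0 := h0 ▸ hν F
  have h2 : ν F = ENNReal.ofReal δ ^ s := by
    change ENNReal.ofReal δ ^ s * μ.map c F = _
    rw [Measure.map_apply hcm hFc.isClosed.measurableSet,
      show c ⁻¹' F = Set.univ from Set.eq_univ_of_forall hcF, measure_univ, mul_one]
  rw [h2] at h1
  have h3 : 0 < ENNReal.ofReal δ ^ s := ENNReal.rpow_pos (by simpa using hδ) (by simp)
  exact absurd h1 (not_le.2 h3)

lemma sum_le_one [MeasurableSpace X] [BorelSpace X] (hr : ∀ j, r j ∈ Set.Ioo (0 : ℝ) 1)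
    (hg : ∀ j x y, dist (g j x) (g j y) = r j * dist x y) (hFne : F.Nonempty)
    (hFc : IsCompact F) (hF : F = ⋃ j, g j '' F)
    (hsep : ∀ j j', j ≠ j' → Disjoint (g j '' F) (g j' '' F))
    (s : ℝ) (hs : 0 ≤ s) (hdim : dimH F = ENNReal.ofReal s) : ∑ j, r j ^ s ≤ 1 := by
  by_contra hcon
  push Not at hcon
  have hcont : Continuous fun x : ℝ => ∑ j, r j ^ x :=
    continuous_finsetSum _ fun j _ => Real.continuous_const_rpow (hr j).1.ne'
  have h1 : ∀ᶠ x in nhds s, 1 < ∑ j, r j ^ x := hcont.continuousAt.eventually (lt_mem_nhds hcon)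
  obtain ⟨s', hs', hlt⟩ := ((h1.filter_mono nhdsWithin_le_nhds).and
    (self_mem_nhdsWithin (s := Set.Ioi s))).exists
  have hlt' : s < s' := hlt
  have hpos := positive_measure g r F hr hg hFne hFc hF hsep s' (hs.trans_lt hlt') hs'.le
  have hs0 : 0 ≤ s' := hs.trans hlt'.le
  have h2 := le_dimH_of_hausdorffMeasure_ne_zero (d := (⟨s', hs0⟩ : NNReal)) hpos
  rw [hdim] at h2
  have h3 : ENNReal.ofNNReal ⟨s', hs0⟩ = ENNReal.ofReal s' := by
    rw [ENNReal.ofReal_eq_coe_nnreal hs0]; rfl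
  rw [h3, ENNReal.ofReal_le_ofReal_iff hs] at h2
  linarith

end lower

section ext
variable {X : Type*} [MetricSpace X] [MeasurableSpace X] [BorelSpace X] {t : ℕ}

lemma borel_ext (g : Fin t → X → X) (r : Fin t → ℝ) (F : Set X)
    (hr : ∀ j, r j ∈ Set.Ioo (0 : ℝ) 1)
    (hg : ∀ j x y, dist (g j x) (g j y) = r j * dist x y)
    (hFc : IsCompact F) (hF : F = ⋃ j, g j '' F)
    (hsep : ∀ j j', j ≠ j' → Disjoint (g j '' F) (g j' '' F))
    (f : X → ℝ) (hf : ContinuousOn f F) (hinj : Set.InjOn f F) (s : ℝ)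
    (w : List (Fin t)) (hfin : μH[s] (cylinder g F w) ≠ ⊤) (D : ENNReal) (hD : D ≠ ⊤)
    (h : ∀ v, μH[s] (f '' cylinder g F (w ++ v)) = D * μH[s] (cylinder g F (w ++ v)))
    (B : Set X) (hB : B ⊆ cylinder g F w) (hBm : MeasurableSet B) :
    μH[s] (f '' B) = D * μH[s] B := by
  obtain ⟨δ, hδ, hsep'⟩ := exists_sep g r F hr hg hFc hsep
  obtain ⟨q, hq0, hq1, hq⟩ := exists_ratio_bound r hr
  obtain ⟨Δ, hΔ⟩ := Metric.isBounded_iff.1 hFc.isBounded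
  have hKF := cyl_subset g F hF w
  have hKc := cyl_compact g r F hr hg hFc w
  have hsub : ∀ v, cylinder g F (w ++ v) ⊆ cylinder g F w := by
    intro v
    induction v using List.reverseRecOn with
    | nil => simp
    | append_singleton v j ih =>
      refine subset_trans ?_ ih
      rw [cyl_snoc g F hF (w ++ v), ← List.append_assoc]
      exact Set.subset_iUnion (fun j => cylinder g F (w ++ v ++ [j])) j
  set K := cylinder g F w with hK
  have : CompactSpace K := isCompact_iff_compactSpace.1 hKc
  have hval : MeasurableEmbedding (Subtype.val : K → X) :=
    MeasurableEmbedding.subtype_coe hKc.isClosed.measurableSet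
  let h' : K → ℝ := fun x => f x
  have hcont : Continuous h' := continuousOn_iff_continuous_restrict.1 (hf.mono hKF)
  have hemb : MeasurableEmbedding h' := by
    refine hcont.measurableEmbedding ?_
    intro x y hxy
    exact Subtype.ext (hinj (hKF x.2) (hKF y.2) hxy)
  let C : Set (Set K) := {A | A = ∅ ∨ ∃ v, A = Subtype.val ⁻¹' cylinder g F (w ++ v)}
  let μ₁ : Measure K := D • Measure.comap Subtype.val μH[s]
  let μ₂ : Measure K := Measure.comap h' μH[s]
  have himg : ∀ A ⊆ K, μ₁ (Subtype.val ⁻¹' A) = D * μH[s] A := by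
    intro A hA
    change D * Measure.comap Subtype.val μH[s] _ = _
    rw [hval.comap_apply, Subtype.image_preimage_coe, Set.inter_eq_right.2 hA]
  have himg2 : ∀ A ⊆ K, μ₂ (Subtype.val ⁻¹' A) = μH[s] (f '' A) := by
    intro A hA
    change Measure.comap h' μH[s] _ = _
    rw [hemb.comap_apply, show h' = f ∘ Subtype.val from rfl, Set.image_comp,
      Subtype.image_preimage_coe, Set.inter_eq_right.2 hA]
  have hbasis : TopologicalSpace.IsTopologicalBasis C := by
    refine TopologicalSpace.isTopologicalBasis_of_isOpen_of_nhds ?_ ?_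
    · rintro u (rfl | ⟨v, rfl⟩)
      · exact isOpen_empty
      · rw [Metric.isOpen_iff]
        intro x hx
        refine ⟨((w ++ v).map r).prod * δ, mul_pos (R_pos r hr _) hδ, ?_⟩
        intro y hy
        by_contra hcon
        have := cyl_sep g r F hr hg hF δ hδ hsep' (w ++ v) x hx y (hKF y.2) hcon
        rw [Metric.mem_ball, dist_comm] at hy
        exact absurd this (not_le.2 hy)
    · intro a u hau hu
      obtain ⟨ε, hε, hball⟩ := Metric.isOpen_iff.1 hu a hau
      have hΔ' : 0 < max Δ 1 := by positivity
      obtain ⟨k, hk⟩ := exists_pow_lt_of_lt_one (div_pos hε hΔ') hq1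
      obtain ⟨v, hv, hav⟩ := cyl_word g F hF w a a.2 k
      refine ⟨_, Or.inr ⟨v, rfl⟩, hav, ?_⟩
      intro y hy
      apply hball
      rw [Metric.mem_ball]
      refine (cyl_dist g r F hr hg (max Δ 1) (fun x hx y hy => (hΔ hx hy).trans (le_max_left _ _))
        (w ++ v) y hy a hav).trans_lt ?_
      rw [lt_div_iff₀ hΔ'] at hk
      refine lt_of_le_of_lt ?_ hk
      refine mul_le_mul_of_nonneg_right ?_ hΔ'.le
      rw [List.map_append, List.prod_append]
      have e1 := R_le_pow r hr q hq v
      rw [hv] at e1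
      exact (mul_le_of_le_one_left (R_pos r hr v).le (R_le_one r hr w)).trans e1
  have hpi : IsPiSystem C := by
    rintro _ (rfl | ⟨u, rfl⟩) _ (rfl | ⟨v, rfl⟩) _
    · left; simp
    · left; simp
    · left; simp
    · rw [← Set.preimage_inter]
      rcases cyl_nested g r F hr hg hF hsep (w ++ u) (w ++ v) with h | h | h
      · left; rw [h.inter_eq]; simp
      · right; exact ⟨u, by rw [Set.inter_eq_left.2 h]⟩
      · right; exact ⟨v, by rw [Set.inter_eq_right.2 h]⟩
  have huniv : (Set.univ : Set K) = Subtype.val ⁻¹' K := by ext x; simp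
  have : IsFiniteMeasure μ₁ := by
    constructor
    rw [huniv, himg K subset_rfl]
    exact ENNReal.mul_lt_top hD.lt_top hfin.lt_top
  have hC : ∀ A ∈ C, μ₁ A = μ₂ A := by
    rintro _ (rfl | ⟨v, rfl⟩)
    · simp
    · rw [himg _ (hsub v), himg2 _ (hsub v), h v]
  have heq : μ₁ = μ₂ := by
    refine ext_of_generate_finite C ?_ hpi hC ?_
    · rw [← hbasis.borel_eq_generateFrom]
      exact BorelSpace.measurable_eq
    · rw [huniv]
      exact hC _ (Or.inr ⟨[], by simp [hK]⟩)
  rw [← himg B hB, ← himg2 B hB, heq]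

lemma finite_values (lam : ℝ) (n m : ℕ) (E : Set ℝ) (hE : IsInClassA lam n m E)
    (F : Set X) (g : Fin t → X → X) (r : Fin t → ℝ)
    (hr : ∀ j, r j ∈ Set.Ioo (0 : ℝ) 1)
    (hg : ∀ j x y, dist (g j x) (g j y) = r j * dist x y)
    (hFne : F.Nonempty) (hFc : IsCompact F) (hF : F = ⋃ j, g j '' F)
    (hsep : ∀ j j', j ≠ j' → Disjoint (g j '' F) (g j' '' F))
    (f : X → ℝ) (hfim : f '' F = E) (Cf : ℝ) (hCf : 0 < Cf)
    (hbilip : ∀ x ∈ F, ∀ y ∈ F,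
      Cf⁻¹ * dist x y ≤ dist (f x) (f y) ∧ dist (f x) (f y) ≤ Cf * dist x y)
    (s : ℝ) (hs : 0 ≤ s) :
    ∃ Θ : Finset ENNReal, ∀ w : List (Fin t), ∃ a : ENNReal, a ≠ 0 ∧ a ≠ ⊤ ∧
      ∀ u, (u = w ∨ ∃ j, u = w ++ [j]) → ∃ θ ∈ Θ, μH[s] (f '' cylinder g F u) = a * θ := by
  obtain ⟨⟨h0, h1⟩, hm, hmn, b, hb0, hbn, hinc, hov, hcard, hEne, hEc, hEattr⟩ := hE
  obtain ⟨δ, hδ, hsep'⟩ := exists_sep g r F hr hg hFc hsep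
  obtain ⟨Δ₀, hΔ₀⟩ := Metric.isBounded_iff.1 hFc.isBounded
  obtain ⟨Q₀, hQ₀⟩ := Metric.isBounded_iff.1 hEc.isBounded
  obtain ⟨ε, hε, hgap⟩ := finite_gap (Finset.univ.image r)
  set ρ := min ε 1 with hρ
  have hρ0 : 0 < ρ := by positivity
  have hρ1 : ρ ≤ 1 := min_le_right _ _
  have hρr : ∀ j, ρ ≤ r j := fun j =>
    (min_le_left _ _).trans (hgap _ (Finset.mem_image.2 ⟨j, Finset.mem_univ _, rfl⟩) (hr j).1)
  set Δ := max Δ₀ 1 with hΔdef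
  have hΔ0 : 0 < Δ := by positivity
  have hΔ : ∀ x ∈ F, ∀ y ∈ F, dist x y ≤ Δ := fun x hx y hy =>
    (hΔ₀ hx hy).trans (le_max_left _ _)
  set Q := max Q₀ 1 with hQdef
  have hQ0 : 0 < Q := by positivity
  have hQ : ∀ x ∈ E, ∀ y ∈ E, |x - y| ≤ Q := fun x hx y hy =>
    (hQ₀ hx hy).trans (le_max_left _ _)
  set κ := min 1 (Cf⁻¹ * δ * ρ / Q) with hκ
  have hκ0 : 0 < κ := by positivity
  have hκ1 : κ ≤ 1 := min_le_left _ _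
  have hκ2 : Q * κ ≤ Cf⁻¹ * δ * ρ := by
    have : κ ≤ Cf⁻¹ * δ * ρ / Q := min_le_right _ _
    rw [le_div_iff₀ hQ0] at this
    linarith
  obtain ⟨Θ, hΘ⟩ := pieces lam h0 b n E hEattr
    (classA_finite_type lam n m b h0 h1 hmn hb0 hbn hinc hov hcard) Q hQ s hs
    (Cf * Δ / (lam * κ))
  refine ⟨Θ, fun w => ?_⟩
  set R := (w.map r).prod with hR
  have hR0 : 0 < R := R_pos r hr w
  have hR1 : R ≤ 1 := R_le_one r hr w
  obtain ⟨k, hk1, hk2⟩ := exists_nat_pow_near_of_lt_one (mul_pos hκ0 hR0)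
    (mul_le_one₀ hκ1 hR0.le hR1) h0 h1
  have hlk : 0 < lam ^ (k + 1) := pow_pos h0 _
  refine ⟨ENNReal.ofReal (lam ^ (k+1)) ^ s, ?_, ?_, ?_⟩
  · exact (ENNReal.rpow_pos (by simpa using hlk) (by simp)).ne'
  · exact ENNReal.rpow_ne_top_of_nonneg hs (by simp)
  intro u hu
  have hRu : ρ * R ≤ (u.map r).prod ∧ (u.map r).prod ≤ R := by
    rcases hu with rfl | ⟨j, rfl⟩
    · exact ⟨mul_le_of_le_one_left hR0.le hρ1, le_rfl⟩
    · rw [List.map_append, List.prod_append, ← hR]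
      simp only [List.map_cons, List.map_nil, List.prod_cons, List.prod_nil, mul_one]
      constructor
      · rw [mul_comm]; exact mul_le_mul_of_nonneg_left (hρr j) hR0.le
      · exact mul_le_of_le_one_right hR0.le (hr j).2.le
  have huF := cyl_subset g F hF u
  refine hΘ (k+1) _ ?_ ((cyl_nonempty g F hFne u).image f) ?_ ?_
  · rw [← hfim]; exact Set.image_mono huF
  · rintro _ ⟨x, hx, rfl⟩ y hy hxy
    rw [← hfim] at hy
    obtain ⟨y, hyF, rfl⟩ := hy
    by_contra hcon
    have hny : y ∉ cylinder g F u := fun h => hcon ⟨y, h, rfl⟩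
    have e1 := cyl_sep g r F hr hg hF δ hδ hsep' u x hx y hyF hny
    have e2 := (hbilip x (huF hx) y hyF).1
    rw [Real.dist_eq] at e2
    have e3 : Cf⁻¹ * (ρ * R * δ) ≤ Cf⁻¹ * dist x y := by
      refine mul_le_mul_of_nonneg_left (le_trans ?_ e1) (by positivity)
      exact mul_le_mul_of_nonneg_right hRu.1 hδ.le
    have e4 : Q * lam ^ (k+1) < Q * (κ * R) := mul_lt_mul_of_pos_left hk1 hQ0
    have e5 : Q * κ * R ≤ Cf⁻¹ * δ * ρ * R := mul_le_mul_of_nonneg_right hκ2 hR0.le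
    nlinarith
  · rintro _ ⟨x, hx, rfl⟩ _ ⟨y, hy, rfl⟩
    have e1 := cyl_dist g r F hr hg Δ hΔ u x hx y hy
    have e2 := (hbilip x (huF hx) y (huF hy)).2
    rw [Real.dist_eq] at e2
    have e3 : dist x y ≤ R * Δ := e1.trans (mul_le_mul_of_nonneg_right hRu.2 hΔ0.le)
    have e4 : Cf * dist x y ≤ Cf * (R * Δ) := mul_le_mul_of_nonneg_left e3 hCf.le
    refine e2.trans (e4.trans ?_)
    rw [pow_succ, div_mul_eq_mul_div, le_div_iff₀ (by positivity)]
    have : Cf * Δ * lam * (κ * R) ≤ Cf * Δ * lam * lam ^ k :=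
      mul_le_mul_of_nonneg_left hk2 (by positivity)
    linarith

end ext


/-- **Lemma 4.** With `E ∈ 𝒜(λ, n, m)`, `F` dust-like and `f : F → E` a
bi-Lipschitz bijection, there are a finite word `w` and a constant `d̄ > 0` such that
`H^s(f(B)) = d̄ · H^s(B)` for every Borel set `B ⊆ F_w`. -/
theorem exists_cylinder_with_constant_density
    (lam : ℝ) (n m : ℕ) (E : Set ℝ) (hE : IsInClassA lam n m E)
    (d t : ℕ) (ht : 2 ≤ t)
    (F : Set (EuclideanSpace ℝ (Fin d)))
    (g : Fin t → EuclideanSpace ℝ (Fin d) → EuclideanSpace ℝ (Fin d))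
    (r : Fin t → ℝ)
    (hr : ∀ j, r j ∈ Set.Ioo (0 : ℝ) 1)
    (hg : ∀ j x y, dist (g j x) (g j y) = r j * dist x y)
    (hFne : F.Nonempty) (hFc : IsCompact F)
    (hFattr : F = ⋃ j, g j '' F)
    (hsep : ∀ j j', j ≠ j' → Disjoint (g j '' F) (g j' '' F))
    (f : EuclideanSpace ℝ (Fin d) → ℝ)
    (hfim : f '' F = E) (hfinj : Set.InjOn f F)
    (Cf : ℝ) (hCf : 0 < Cf)
    (hbilip : ∀ x ∈ F, ∀ y ∈ F,
      Cf⁻¹ * dist x y ≤ dist (f x) (f y) ∧ dist (f x) (f y) ≤ Cf * dist x y)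
    (s : ℝ) (hs : 0 ≤ s)
    (hsE : dimH E = ENNReal.ofReal s) (hsF : dimH F = ENNReal.ofReal s) :
    ∃ (w : List (Fin t)) (dbar : ℝ), 0 < dbar ∧
      ∀ B ⊆ cylinder g F w, MeasurableSet B →
        μH[s] (f '' B) = ENNReal.ofReal dbar * μH[s] B := by
  have hlip : LipschitzOnWith Cf.toNNReal f F := LipschitzOnWith.of_dist_le_mul fun x hx y hy => by
    rw [Real.coe_toNNReal _ hCf.le]; exact (hbilip x hx y hy).2
  have hub : ∀ A ⊆ F, μH[s] (f '' A) ≤ (Cf.toNNReal : ENNReal) ^ s * μH[s] A := fun A hA =>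
    (hlip.mono hA).hausdorffMeasure_image_le hs
  by_cases hzero : μH[s] F = 0
  · refine ⟨[], 1, one_pos, fun B hB _ => ?_⟩
    have hBF : B ⊆ F := hB
    have h1 : μH[s] B = 0 := measure_mono_null hBF hzero
    have h2 := hub B hBF
    rw [h1, mul_zero] at h2
    rw [h1, mul_zero]
    exact le_zero_iff.1 h2
  have hlb : ∀ A ⊆ F, μH[s] A ≤ (Cf.toNNReal : ENNReal) ^ s * μH[s] (f '' A) := by
    intro A hA
    have hinv : ∀ x ∈ F, Function.invFunOn f F (f x) = x := fun x hx =>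
      hfinj.leftInvOn_invFunOn hx
    have hl : LipschitzOnWith Cf.toNNReal (Function.invFunOn f F) (f '' A) := by
      refine LipschitzOnWith.of_dist_le_mul ?_
      rintro _ ⟨x, hx, rfl⟩ _ ⟨y, hy, rfl⟩
      rw [hinv x (hA hx), hinv y (hA hy), Real.coe_toNNReal _ hCf.le]
      have := (hbilip x (hA hx) y (hA hy)).1
      rwa [inv_mul_le_iff₀ hCf] at this
    have := hl.hausdorffMeasure_image_le hs
    rwa [Set.image_image, Set.image_congr (fun x hx => hinv x (hA hx)), Set.image_id'] at this
  have hsum := sum_le_one g r F hr hg hFne hFc hFattr hsep s hs hsF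
  have htop : μH[s] F ≠ ⊤ := (measure_lt_top g r F hr hg hFc hFattr s hs hsum).ne
  have hsubF := cyl_subset g F hFattr
  have hcomp := cyl_compact g r F hr hg hFc
  have hKt : (Cf.toNNReal : ENNReal) ^ s ≠ ⊤ := ENNReal.rpow_ne_top_of_nonneg hs (by simp)
  set c : List (Fin t) → ENNReal := fun w => μH[s] (cylinder g F w) with hc
  set a : List (Fin t) → ENNReal := fun w => μH[s] (f '' cylinder g F w) with ha
  have hct : ∀ w, c w ≠ ⊤ := fun w => ne_top_of_le_ne_top htop (measure_mono (hsubF w))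
  have hcw : ∀ w, c w = ENNReal.ofReal (w.map r).prod ^ s * μH[s] F :=
    cyl_measure g r F hr hg s hs
  have hc0 : ∀ w, c w ≠ 0 := by
    intro w
    rw [hcw]
    exact mul_ne_zero (ENNReal.rpow_pos (by simpa using R_pos r hr w) (by simp)).ne' hzero
  have hat : ∀ w, a w ≠ ⊤ := fun w =>
    ne_top_of_le_ne_top (ENNReal.mul_ne_top hKt (hct w)) (hub _ (hsubF w))
  have ha0 : ∀ w, a w ≠ 0 := by
    intro w h
    have h2 : c w ≤ _ * a w := hlb _ (hsubF w)
    rw [h, mul_zero] at h2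
    exact hc0 w (le_zero_iff.1 h2)
  have hcp : ∀ w, 0 < (c w).toReal := fun w => ENNReal.toReal_pos (hc0 w) (hct w)
  have hap : ∀ w, 0 < (a w).toReal := fun w => ENNReal.toReal_pos (ha0 w) (hat w)
  have hcsum : ∀ w, (c w).toReal = ∑ j, (c (w ++ [j])).toReal := by
    intro w
    rw [← ENNReal.toReal_sum fun j _ => hct _]
    congr 1
    simp only [hc]
    rw [cyl_snoc g F hFattr w, measure_iUnion _ (fun j => (hcomp _).isClosed.measurableSet),
      tsum_fintype]
    exact fun j j' h => cyl_snoc_disj g r F hr hg hsep w j j' h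
  have hasum : ∀ w, (a w).toReal = ∑ j, (a (w ++ [j])).toReal := by
    intro w
    rw [← ENNReal.toReal_sum fun j _ => hat _]
    congr 1
    simp only [ha]
    rw [cyl_snoc g F hFattr w, Set.image_iUnion, measure_iUnion _
      (fun j => ((hcomp _).image_of_continuousOn
        (hlip.continuousOn.mono (hsubF _))).isClosed.measurableSet),
      tsum_fintype]
    intro j j' h
    exact Set.disjoint_image_image fun x hx y hy hxy => by
      have := hfinj (hsubF _ hx) (hsubF _ hy) hxy
      subst this
      exact Set.disjoint_left.1 (cyl_snoc_disj g r F hr hg hsep w j j' h) hx hy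
  have hcj : ∀ w j, (c (w ++ [j])).toReal = r j ^ s * (c w).toReal := by
    intro w j
    rw [hcw, hcw, List.map_append, List.prod_append]
    simp only [List.map_cons, List.map_nil, List.prod_cons, List.prod_nil, mul_one]
    rw [ENNReal.ofReal_mul (R_pos r hr w).le, ENNReal.mul_rpow_of_nonneg _ _ hs,
      ENNReal.toReal_mul, ENNReal.toReal_mul, ENNReal.toReal_mul,
      ENNReal.ofReal_rpow_of_pos (hr j).1, ENNReal.toReal_ofReal (Real.rpow_nonneg (hr j).1.le _)]
    ring
  have hrs : ∀ j, 0 < r j ^ s := fun j => Real.rpow_pos_of_pos (hr j).1 s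
  have hp1 : ∑ j, r j ^ s = 1 := by
    have h1 := hcsum []
    simp only [hcj] at h1
    rw [← Finset.sum_mul] at h1
    have := hcp []
    exact mul_right_cancel₀ this.ne' (by rw [one_mul]; exact h1.symm)
  obtain ⟨Θ, hΘ⟩ := finite_values lam n m E hE F g r hr hg hFne hFc hFattr hsep f hfim Cf hCf
    hbilip s hs
  obtain ⟨w, hw⟩ := constant_ratio (fun w => (a w).toReal / (c w).toReal)
    (fun w => div_pos (hap w) (hcp w))
    ⟨((Cf.toNNReal : ENNReal) ^ s).toReal, by
      rintro _ ⟨w, rfl⟩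
      change (a w).toReal / (c w).toReal ≤ _
      rw [div_le_iff₀ (hcp w), ← ENNReal.toReal_mul]
      exact ENNReal.toReal_mono (ENNReal.mul_ne_top hKt (hct w)) (hub _ (hsubF w))⟩
    (fun j => r j ^ s) hrs hp1
    (fun w => by
      change (a w).toReal / (c w).toReal = ∑ j, r j ^ s * ((a (w ++ [j])).toReal / (c (w ++ [j])).toReal)
      rw [hasum w, Finset.sum_div]
      refine Finset.sum_congr rfl fun j _ => ?_
      rw [hcj]
      have := (hrs j).ne'
      have := (hcp w).ne'
      field_simp)
    ((Θ ×ˢ Θ ×ˢ (Finset.univ : Finset (Fin t))).image fun p =>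
      p.1.toReal / p.2.1.toReal / r p.2.2 ^ s)
    (fun w j => by
      obtain ⟨A, hA0, hAt, hA⟩ := hΘ w
      obtain ⟨θ, hθ, e1⟩ := hA w (Or.inl rfl)
      obtain ⟨θ', hθ', e2⟩ := hA (w ++ [j]) (Or.inr ⟨j, rfl⟩)
      refine Finset.mem_image.2 ⟨(θ', θ, j), ?_, ?_⟩
      · simp [hθ, hθ']
      · have e1' : (a w).toReal = A.toReal * θ.toReal := by
          rw [← ENNReal.toReal_mul]; exact congrArg _ e1
        have e2' : (a (w ++ [j])).toReal = A.toReal * θ'.toReal := by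
          rw [← ENNReal.toReal_mul]; exact congrArg _ e2
        change _ = (a (w ++ [j])).toReal / (c (w ++ [j])).toReal / ((a w).toReal / (c w).toReal)
        have hA' : 0 < A.toReal := ENNReal.toReal_pos hA0 hAt
        have hθp : θ.toReal ≠ 0 := by
          intro h
          have := hap w
          rw [e1', h, mul_zero] at this
          exact lt_irrefl _ this
        rw [e1', e2', hcj]
        have := (hrs j).ne'
        have := (hcp w).ne'
        field_simp)
  have hd : 0 < (a w).toReal / (c w).toReal := div_pos (hap w) (hcp w)
  refine ⟨w, (a w).toReal / (c w).toReal, hd, fun B hB hBm => ?_⟩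
  refine borel_ext g r F hr hg hFc hFattr hsep f hlip.continuousOn hfinj s w (hct w) _ (by simp)
    ?_ B hB hBm
  intro v
  change a (w ++ v) = _ * c (w ++ v)
  have h1 : (a (w ++ v)).toReal / (c (w ++ v)).toReal = (a w).toReal / (c w).toReal := hw v
  rw [← h1, ← ENNReal.ofReal_toReal (hat (w ++ v)), ← ENNReal.ofReal_toReal (hct (w ++ v)),
    ← ENNReal.ofReal_mul (by positivity)]
  congr 1
  rw [ENNReal.toReal_ofReal (hcp _).le, ENNReal.toReal_ofReal (hap _).le,
    div_mul_cancel₀ _ (hcp _).ne']
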